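/- arXiv:1510.02896 — 2 statements merged into one kernel-verified Lean document; each statement's English description precedes it below -/
import Mathlib

section
/- Let l > 0 and Λ ∈ ℝ, and let h, φ : (0, l) → ℝ be smooth strictly positive functions satisfying h''(s)/h(s) + (φ'(s)/φ(s))·(h'(s)/h(s)) + Λ + φ''(s)/φ(s) ≤ 0 for all s ∈ (0, l). Then for every smooth function f : ℝ → ℝ whose support is a compact subset of (0, l), one has Λ·∫₀ˡ f(s)² ds ≤ (3/2)·∫₀ˡ f'(s)² ds. -/
open MeasureTheory Set

/-!
The function `w = (log (h φ))' = h'/h + φ'/φ` satisfies the Riccati inequality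
`w' + (3/4) w² + Λ ≤ 0`, because `(3/4) (x + y)² ≤ x² + x y + y²`. Since `f² w` vanishes at the
endpoints, `0 = ∫ (f² w)' ≤ ∫ (2 f f' w - (3/4) f² w² - Λ f²)`, and completing the square in `w`
leaves `Λ ∫ f² ≤ (4/3) ∫ (f')²`, which is sharper than the bound with `3/2`.
-/

section LogDeriv

variable {𝕜 𝕜' : Type*} [NontriviallyNormedField 𝕜] [NontriviallyNormedField 𝕜']
  [NormedAlgebra 𝕜 𝕜']

theorem hasDerivAt_logDeriv {g : 𝕜 → 𝕜'} {x : 𝕜} (hg : DifferentiableAt 𝕜 g x)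
    (hg' : DifferentiableAt 𝕜 (deriv g) x) (hgx : g x ≠ 0) :
    HasDerivAt (logDeriv g) (deriv (deriv g) x / g x - logDeriv g x ^ 2) x := by
  refine (hg'.hasDerivAt.div hg.hasDerivAt hgx).congr_deriv ?_
  rw [logDeriv_apply]
  field_simp

theorem hasDerivAt_logDeriv_of_contDiffOn {g : 𝕜 → 𝕜'} {U : Set 𝕜} {x : 𝕜}
    (hg : ContDiffOn 𝕜 2 g U) (hU : IsOpen U) (hx : x ∈ U) (hgx : g x ≠ 0) :
    HasDerivAt (logDeriv g) (deriv (deriv g) x / g x - logDeriv g x ^ 2) x := by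
  have hg' : ContDiffOn 𝕜 1 (deriv g) U := hg.deriv_of_isOpen hU (by norm_num)
  exact hasDerivAt_logDeriv (hg.differentiableOn two_ne_zero |>.differentiableAt (hU.mem_nhds hx))
    (hg'.differentiableOn one_ne_zero |>.differentiableAt (hU.mem_nhds hx)) hgx

end LogDeriv

section Riccati

variable {a b : ℝ}

theorem integral_nonneg_of_hasDerivAt_le_of_tsupport_subset {G G' ψ : ℝ → ℝ} (hab : a ≤ b)
    (hG : ∀ s ∈ Ioo a b, HasDerivAt G (G' s) s) (hGsupp : tsupport G ⊆ Ioo a b)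
    (hψ : IntegrableOn ψ (Icc a b)) (hle : ∀ s ∈ Ioo a b, G' s ≤ ψ s) :
    0 ≤ ∫ s in a..b, ψ s := by
  have hGcont : Continuous G :=
    continuous_of_tsupport fun s hs => (hG s (hGsupp hs)).continuousAt
  have hGa : G a = 0 := image_eq_zero_of_notMem_tsupport fun ha => left_notMem_Ioo (hGsupp ha)
  have hGb : G b = 0 := image_eq_zero_of_notMem_tsupport fun hb => right_notMem_Ioo (hGsupp hb)
  calc 0 = G b - G a := by rw [hGa, hGb, sub_zero]
    _ ≤ ∫ s in a..b, ψ s :=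
      intervalIntegral.sub_le_integral_of_hasDeriv_right_of_le hab hGcont.continuousOn
        (fun s hs => (hG s hs).hasDerivWithinAt) hψ hle

theorem integral_mul_sq_le_of_riccati {c : ℝ} {V w w' f : ℝ → ℝ} (hab : a ≤ b) (hc : 0 < c)
    (hV : ContinuousOn V (Ioo a b)) (hw : ∀ s ∈ Ioo a b, HasDerivAt w (w' s) s)
    (hric : ∀ s ∈ Ioo a b, w' s + c⁻¹ * w s ^ 2 + V s ≤ 0)
    (hf : ContDiff ℝ 1 f) (hfsupp : tsupport f ⊆ Ioo a b) :
    ∫ s in a..b, V s * f s ^ 2 ≤ c * ∫ s in a..b, deriv f s ^ 2 := by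
  have hf' : Continuous fun s => c * deriv f s ^ 2 :=
    continuous_const.mul ((hf.continuous_deriv le_rfl).pow 2)
  have hVf : Continuous fun s => V s * f s ^ 2 := by
    have hcont : Continuous fun s => f s * (f s * V s) :=
      (hf.continuous.continuousOn.mul (hf.continuous.continuousOn.mul hV))
        |>.continuous_of_tsupport_subset isOpen_Ioo (tsupport_mul_subset_left.trans hfsupp)
    exact hcont.congr fun s => by ring
  have hderiv : ∀ s ∈ Ioo a b, HasDerivAt (fun s => f s * (f s * w s))
      (deriv f s * (f s * w s) + f s * (deriv f s * w s + f s * w' s)) s := fun s hs =>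
    have hfs : HasDerivAt f (deriv f s) s := (hf.differentiable one_ne_zero s).hasDerivAt
    hfs.fun_mul (hfs.fun_mul (hw s hs))
  have hle : ∀ s ∈ Ioo a b, deriv f s * (f s * w s) + f s * (deriv f s * w s + f s * w' s) ≤
      c * deriv f s ^ 2 - V s * f s ^ 2 := fun s hs => by
    have hyoung : 2 * deriv f s * (f s * w s) ≤ c * deriv f s ^ 2 + c⁻¹ * (f s * w s) ^ 2 :=
      two_mul_le_add_mul_sq hc
    have hric_f : f s ^ 2 * (w' s + c⁻¹ * w s ^ 2 + V s) ≤ 0 :=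
      mul_nonpos_of_nonneg_of_nonpos (sq_nonneg (f s)) (hric s hs)
    linarith
  have hnonneg : 0 ≤ ∫ s in a..b, (c * deriv f s ^ 2 - V s * f s ^ 2) :=
    integral_nonneg_of_hasDerivAt_le_of_tsupport_subset hab hderiv
      (tsupport_mul_subset_left.trans hfsupp) (hf'.sub hVf).continuousOn.integrableOn_Icc hle
  rwa [intervalIntegral.integral_sub (hf'.intervalIntegrable a b) (hVf.intervalIntegrable a b),
    intervalIntegral.integral_const_mul, sub_nonneg] at hnonneg

end Riccati

theorem stmt_4_general {a b : ℝ} (hab : a ≤ b) {V h φ f : ℝ → ℝ}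
    (hV : ContinuousOn V (Ioo a b))
    (hh : ContDiffOn ℝ 2 h (Ioo a b)) (hφ : ContDiffOn ℝ 2 φ (Ioo a b))
    (hh₀ : ∀ s ∈ Ioo a b, h s ≠ 0) (hφ₀ : ∀ s ∈ Ioo a b, φ s ≠ 0)
    (hineq : ∀ s ∈ Ioo a b,
      deriv (deriv h) s / h s + (deriv φ s / φ s) * (deriv h s / h s) + V s
        + deriv (deriv φ) s / φ s ≤ 0)
    (hf : ContDiff ℝ 1 f) (hfsupp : tsupport f ⊆ Ioo a b) :
    ∫ s in a..b, V s * f s ^ 2 ≤ (4 / 3) * ∫ s in a..b, deriv f s ^ 2 := by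
  refine integral_mul_sq_le_of_riccati (w := logDeriv h + logDeriv φ) hab (by norm_num) hV
    (fun s hs => (hasDerivAt_logDeriv_of_contDiffOn hh isOpen_Ioo hs (hh₀ s hs)).add
      (hasDerivAt_logDeriv_of_contDiffOn hφ isOpen_Ioo hs (hφ₀ s hs)))
    (fun s hs => ?_) hf hfsupp
  have hquad (x y : ℝ) : (4 / 3)⁻¹ * (x + y) ^ 2 ≤ x ^ 2 + y * x + y ^ 2 := by
    linarith [sq_nonneg (x - y)]
  have hineq_s := hineq s hs
  simp only [← logDeriv_apply] at hineq_s
  rw [Pi.add_apply]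
  linarith [hquad (logDeriv h s) (logDeriv φ s)]

/-- Key spectral consequence in the proof of Proposition 2.3: under the
differential inequality for `h, φ` on `(0, l)`, every smooth test function `f`
supported in a compact subset of `(0, l)` satisfies
`Λ ∫₀ˡ f² ≤ (3/2) ∫₀ˡ (f')²`. -/
theorem stmt_4 (l Λ : ℝ) (hl : 0 < l) (h φ : ℝ → ℝ)
    (hh : ContDiffOn ℝ (⊤ : ℕ∞) h (Set.Ioo 0 l)) (hφ : ContDiffOn ℝ (⊤ : ℕ∞) φ (Set.Ioo 0 l))
    (hhpos : ∀ s ∈ Set.Ioo 0 l, 0 < h s) (hφpos : ∀ s ∈ Set.Ioo 0 l, 0 < φ s)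
    (hineq : ∀ s ∈ Set.Ioo 0 l,
      deriv (deriv h) s / h s + (deriv φ s / φ s) * (deriv h s / h s) + Λ
        + deriv (deriv φ) s / φ s ≤ 0)
    (f : ℝ → ℝ) (hf : ContDiff ℝ (⊤ : ℕ∞) f)
    (hfc : HasCompactSupport f) (hfsupp : tsupport f ⊆ Set.Ioo 0 l) :
    Λ * (∫ s in (0:ℝ)..l, f s ^ 2) ≤
      (3 / 2) * ∫ s in (0:ℝ)..l, (deriv f s) ^ 2 := by
  have hsharp := stmt_4_general hl.le continuousOn_const (contDiffOn_infty.1 hh 2)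
    (contDiffOn_infty.1 hφ 2) (fun s hs => (hhpos s hs).ne') (fun s hs => (hφpos s hs).ne') hineq
    (contDiff_infty.1 hf 1) hfsupp
  rw [intervalIntegral.integral_const_mul] at hsharp
  have henergy : 0 ≤ ∫ s in (0:ℝ)..l, deriv f s ^ 2 :=
    intervalIntegral.integral_nonneg_of_forall hl.le fun s => sq_nonneg (deriv f s)
  linarith
end

section
/- Let Λ > 0 and l > 0. Suppose there exist smooth strictly positive functions h, φ : (0, l) → ℝ satisfying h''(s)/h(s) + (φ'(s)/φ(s))·(h'(s)/h(s)) + Λ + φ''(s)/φ(s) ≤ 0 for all s ∈ (0, l). Then l ≤ √(3/2)·π/√Λ. -/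
open MeasureTheory Set Real

/-! The sum `w = h'/h + φ'/φ` of the logarithmic derivatives satisfies the Riccati inequality
`w' ≤ -(Λ + (h'/h)² + (h'/h)(φ'/φ) + (φ'/φ)²) ≤ -(Λ + 3/4 w²)`, so
`arctan (√(3/(4Λ)) w)` decreases at rate at least `√(3Λ)/2`; since `arctan` oscillates by less than
`π`, the interval has length at most `2π/√(3Λ) = √(4/3) · π / √Λ`. Equality holds throughout for
`h = φ = cos (√(3Λ)/2 · s) ^ (2/3)` where the cosine is positive, so this bound is sharp. -/

section Riccati

variable {w w' : ℝ → ℝ} {a b α β : ℝ}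

theorem sub_lt_pi_div_sqrt_of_riccati_Icc (hα : 0 < α) (hβ : 0 < β)
    (hcont : ContinuousOn w (Icc a b)) (hw : ∀ s ∈ Ioo a b, HasDerivAt w (w' s) s)
    (hriccati : ∀ s ∈ Ioo a b, w' s ≤ -(α + β * w s ^ 2)) :
    b - a < π / √(α * β) := by
  rcases lt_or_ge b a with hba | hab
  · exact (sub_neg.2 hba).trans (by positivity)
  have hderiv (s) (hs : s ∈ Ioo a b) : HasDerivAt (fun x ↦ arctan (√(β / α) * w x))
      (1 / (1 + (√(β / α) * w s) ^ 2) * (√(β / α) * w' s)) s :=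
    ((hw s hs).const_mul _).arctan
  have hrate : α * √(β / α) = √(α * β) := by
    rw [sqrt_div hβ.le, mul_div_left_comm, div_sqrt, mul_comm, ← sqrt_mul hα.le]
  have hderiv_le (s) (hs : s ∈ Ioo a b) :
      deriv (fun x ↦ arctan (√(β / α) * w x)) s ≤ -√(α * β) := by
    rw [(hderiv s hs).deriv, one_div_mul_eq_div, div_le_iff₀ (by positivity)]
    calc √(β / α) * w' s ≤ √(β / α) * -(α + β * w s ^ 2) := by gcongr; exact hriccati s hs
      _ = -√(α * β) * (1 + (√(β / α) * w s) ^ 2) := by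
        rw [← hrate, mul_pow, sq_sqrt (by positivity)]
        field_simp
  have hdecrease : arctan (√(β / α) * w b) - arctan (√(β / α) * w a) ≤ -√(α * β) * (b - a) := by
    refine (convex_Icc a b).image_sub_le_mul_sub_of_deriv_le
      (f := fun x ↦ arctan (√(β / α) * w x)) (by fun_prop) ?_ ?_
      a (left_mem_Icc.2 hab) b (right_mem_Icc.2 hab) hab
    · rw [interior_Icc]
      exact fun s hs ↦ (hderiv s hs).differentiableAt.differentiableWithinAt
    · rwa [interior_Icc]
  rw [lt_div_iff₀' (by positivity)]
  linarith [arctan_lt_pi_div_two (√(β / α) * w a), neg_pi_div_two_lt_arctan (√(β / α) * w b)]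

theorem sub_le_pi_div_sqrt_of_riccati_Ioo (hα : 0 < α) (hβ : 0 < β)
    (hw : ∀ s ∈ Ioo a b, HasDerivAt w (w' s) s)
    (hriccati : ∀ s ∈ Ioo a b, w' s ≤ -(α + β * w s ^ 2)) :
    b - a ≤ π / √(α * β) := by
  refine le_of_forall_lt fun d hd ↦ ?_
  obtain ⟨ε, hε, rfl⟩ : ∃ ε > 0, b - ε - (a + ε) = d :=
    ⟨(b - a - d) / 2, by linarith, by ring⟩
  have hsub : Icc (a + ε) (b - ε) ⊆ Ioo a b := Icc_subset_Ioo (by linarith) (by linarith)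
  exact sub_lt_pi_div_sqrt_of_riccati_Icc hα hβ
    (fun s hs ↦ (hw s (hsub hs)).continuousAt.continuousWithinAt)
    (fun s hs ↦ hw s (hsub (Ioo_subset_Icc_self hs)))
    (fun s hs ↦ hriccati s (hsub (Ioo_subset_Icc_self hs)))

end Riccati

theorem hasDerivAt_logDeriv_s6 {𝕜 𝕜' : Type*} [NontriviallyNormedField 𝕜]
    [NontriviallyNormedField 𝕜'] [NormedAlgebra 𝕜 𝕜'] {f : 𝕜 → 𝕜'} {x : 𝕜}
    (hf : DifferentiableAt 𝕜 f x) (hf' : DifferentiableAt 𝕜 (deriv f) x) (hfx : f x ≠ 0) :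
    HasDerivAt (logDeriv f) (deriv (deriv f) x / f x - logDeriv f x ^ 2) x := by
  refine (hf'.hasDerivAt.div hf.hasDerivAt hfx).congr_deriv ?_
  rw [logDeriv_apply]
  field_simp

theorem stmt_6_general {Λ a b : ℝ} {h φ : ℝ → ℝ} (hΛ : 0 < Λ)
    (hh : DifferentiableOn ℝ h (Ioo a b)) (hh' : DifferentiableOn ℝ (deriv h) (Ioo a b))
    (hφ : DifferentiableOn ℝ φ (Ioo a b)) (hφ' : DifferentiableOn ℝ (deriv φ) (Ioo a b))
    (h_ne : ∀ s ∈ Ioo a b, h s ≠ 0) (φ_ne : ∀ s ∈ Ioo a b, φ s ≠ 0)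
    (hineq : ∀ s ∈ Ioo a b,
      deriv (deriv h) s / h s + (deriv φ s / φ s) * (deriv h s / h s) + Λ
        + deriv (deriv φ) s / φ s ≤ 0) :
    b - a ≤ √(4 / 3) * π / √Λ := by
  have hw (s) (hs : s ∈ Ioo a b) : HasDerivAt (logDeriv h + logDeriv φ)
      (deriv (deriv h) s / h s - logDeriv h s ^ 2
        + (deriv (deriv φ) s / φ s - logDeriv φ s ^ 2)) s :=
    have hmem := Ioo_mem_nhds hs.1 hs.2
    (hasDerivAt_logDeriv_s6 (hh.differentiableAt hmem) (hh'.differentiableAt hmem) (h_ne s hs)).add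
      (hasDerivAt_logDeriv_s6 (hφ.differentiableAt hmem) (hφ'.differentiableAt hmem) (φ_ne s hs))
  have hriccati (s) (hs : s ∈ Ioo a b) :
      deriv (deriv h) s / h s - logDeriv h s ^ 2 + (deriv (deriv φ) s / φ s - logDeriv φ s ^ 2)
        ≤ -(Λ + 3 / 4 * (logDeriv h + logDeriv φ) s ^ 2) := by
    have hs' := hineq s hs
    rw [← logDeriv_apply, ← logDeriv_apply] at hs'
    rw [Pi.add_apply]
    linarith [sq_nonneg (logDeriv h s - logDeriv φ s)]
  calc b - a ≤ π / √(Λ * (3 / 4)) :=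
        sub_le_pi_div_sqrt_of_riccati_Ioo hΛ (by norm_num) hw hriccati
    _ = √(4 / 3) * π / √Λ := by
      rw [sqrt_mul hΛ.le, ← inv_div 4 3, sqrt_inv]
      field_simp

/-- One-dimensional analytic content of Proposition 2.3 (Schoen–Yau type
diameter estimate): if there exist smooth strictly positive `h, φ` on `(0, l)`
with `h''/h + (φ'/φ)(h'/h) + Λ + φ''/φ ≤ 0`, then `l ≤ √(3/2)·π/√Λ`. -/
theorem stmt_6 (Λ l : ℝ) (hΛ : 0 < Λ) (hl : 0 < l)
    (hex : ∃ h φ : ℝ → ℝ,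
      ContDiffOn ℝ (⊤ : ℕ∞) h (Set.Ioo 0 l) ∧ ContDiffOn ℝ (⊤ : ℕ∞) φ (Set.Ioo 0 l) ∧
      (∀ s ∈ Set.Ioo 0 l, 0 < h s) ∧ (∀ s ∈ Set.Ioo 0 l, 0 < φ s) ∧
      (∀ s ∈ Set.Ioo 0 l,
        deriv (deriv h) s / h s + (deriv φ s / φ s) * (deriv h s / h s) + Λ
          + deriv (deriv φ) s / φ s ≤ 0)) :
    l ≤ Real.sqrt (3 / 2) * Real.pi / Real.sqrt Λ := by
  obtain ⟨h, φ, h_smooth, φ_smooth, h_pos, φ_pos, hineq⟩ := hex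
  obtain ⟨hh, hh'⟩ := (contDiffOn_infty_iff_deriv_of_isOpen isOpen_Ioo).1 h_smooth
  obtain ⟨hφ, hφ'⟩ := (contDiffOn_infty_iff_deriv_of_isOpen isOpen_Ioo).1 φ_smooth
  calc l = l - 0 := (sub_zero l).symm
    _ ≤ √(4 / 3) * π / √Λ :=
      stmt_6_general hΛ hh (hh'.differentiableOn (by simp)) hφ (hφ'.differentiableOn (by simp))
        (fun s hs ↦ (h_pos s hs).ne') (fun s hs ↦ (φ_pos s hs).ne') hineq
    _ ≤ √(3 / 2) * π / √Λ := by gcongr √?_ * π / √Λ; norm_num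
end
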